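/- Let N ⊴ G be finite groups with N a p'-group, P a p-subgroup of G with K := NP ⊴ G, and μ ∈ Irr(N) G-invariant with canonical extension μ^◇ to K. Then μ extends to G if and only if μ^◇ extends to G. -/

import Mathlib

open scoped BigOperators Classical

namespace CTC

noncomputable def cfInner (G : Type) [Group G] [Fintype G] (φ ψ : G → ℂ) : ℂ :=
  (Fintype.card G : ℂ)⁻¹ * ∑ g : G, φ g * star (ψ g)

def IsChar (G : Type) [Group G] [Fintype G] (χ : G → ℂ) : Prop :=
  ∃ (n : ℕ) (ρ : Representation ℂ G (Fin n → ℂ)),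
    ∀ g : G, χ g = LinearMap.trace ℂ (Fin n → ℂ) (ρ g)

def IsIrrChar (G : Type) [Group G] [Fintype G] (χ : G → ℂ) : Prop :=
  IsChar G χ ∧ cfInner G χ χ = 1

def Invariant {G : Type} [Group G] (N : Subgroup G) (ϑ : ↥N → ℂ) : Prop :=
  ∀ (g n : G) (h1 : n ∈ N) (h2 : g * n * g⁻¹ ∈ N),
    ϑ ⟨g * n * g⁻¹, h2⟩ = ϑ ⟨n, h1⟩

/-- The order `o(χ)` of the determinantal (linear) character of a representation. -/
noncomputable def detOrder {H : Type} [Group H] {n : ℕ}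
    (ρ : Representation ℂ H (Fin n → ℂ)) : ℕ :=
  orderOf (MonoidHom.comp LinearMap.det ρ)

/-- `μd ∈ Irr(H)` is the canonical extension of `μ ∈ Irr(K)`, `K ≤ H`: it extends
`μ` and the order of its determinantal character is coprime to `|H : K|`. -/
def IsCanonicalExtensionOn {G : Type} [Group G] [Fintype G] (H K : Subgroup G)
    (hKH : K ≤ H) (μ : ↥K → ℂ) (μd : ↥H → ℂ) : Prop :=
  (∀ x : ↥K, μd ⟨x.1, hKH x.2⟩ = μ x) ∧
  ∃ (n : ℕ) (ρ : Representation ℂ ↥H (Fin n → ℂ)),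
    (∀ h : ↥H, μd h = LinearMap.trace ℂ (Fin n → ℂ) (ρ h)) ∧
    Nat.Coprime (detOrder ρ) (K.subgroupOf H).index

open Module

/-- An endomorphism of finite order of a complex vector space is diagonalizable. -/
theorem exists_basis_apply_eq_smul {V : Type*} [AddCommGroup V] [Module ℂ V]
    [FiniteDimensional ℂ V] {f : End ℂ V} {n : ℕ} (hn : n ≠ 0) (hf : f ^ n = 1) :
    ∃ (m : ℕ) (b : Basis (Fin m) ℂ V) (c : Fin m → ℂ), ∀ i, f (b i) = c i • b i := by
  have hsq : Squarefree (Polynomial.X ^ n - 1 : Polynomial ℂ) :=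
    (Polynomial.separable_X_pow_sub_C (1 : ℂ) (by exact_mod_cast hn) one_ne_zero).squarefree
  have hss : f.IsSemisimple := End.isSemisimple_of_squarefree_aeval_eq_zero hsq (by simp [hf])
  have hint : DirectSum.IsInternal f.eigenspace :=
    DirectSum.isInternal_submodule_of_iSupIndep_of_iSup_eq_top f.eigenspaces_iSupIndep
      hss.iSup_eigenspace_eq_top
  let b := hint.collectedBasis fun a ↦ finBasis ℂ (f.eigenspace a)
  have : Finite ((a : ℂ) × Fin (finrank ℂ (f.eigenspace a))) := Module.Finite.finite_basis b
  have := Fintype.ofFinite ((a : ℂ) × Fin (finrank ℂ (f.eigenspace a)))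
  let e := Fintype.equivFin ((a : ℂ) × Fin (finrank ℂ (f.eigenspace a)))
  refine ⟨_, b.reindex e, fun i ↦ (e.symm i).1, fun i ↦ ?_⟩
  rw [Basis.reindex_apply]
  exact End.mem_eigenspace_iff.mp (hint.collectedBasis_mem _ _)

theorem trace_eq_sum_of_apply_eq_smul {V : Type*} [AddCommGroup V] [Module ℂ V] {m : ℕ}
    (b : Basis (Fin m) ℂ V) {f : End ℂ V} {c : Fin m → ℂ} (h : ∀ i, f (b i) = c i • b i) :
    LinearMap.trace ℂ V f = ∑ i, c i := by
  rw [LinearMap.trace_eq_matrix_trace ℂ b, Matrix.trace]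
  simp [LinearMap.toMatrix_apply, h]

section Representation

variable {G : Type} [Group G] [Fintype G] {V W : Type} [AddCommGroup V] [Module ℂ V]
  [FiniteDimensional ℂ V] [AddCommGroup W] [Module ℂ W] [FiniteDimensional ℂ W]
  (ρ : Representation ℂ G V) (σ : Representation ℂ G W)

theorem exists_character_eq_sum (g : G) :
    ∃ (m : ℕ) (c : Fin m → ℂ), (∀ i, c i ^ Fintype.card G = 1) ∧
      ρ.character g = ∑ i, c i ∧ ρ.character g⁻¹ = ∑ i, (c i)⁻¹ := by
  have hpow : ρ g ^ Fintype.card G = 1 := by rw [← map_pow, pow_card_eq_one, map_one]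
  obtain ⟨m, b, c, h⟩ := exists_basis_apply_eq_smul Fintype.card_ne_zero hpow
  have hk (k : ℕ) (i : Fin m) : (ρ g ^ k) (b i) = c i ^ k • b i := by
    induction k with
    | zero => simp
    | succ k ih => rw [pow_succ', Module.End.mul_apply, ih, map_smul, h, smul_smul, pow_succ]
  have hc (i : Fin m) : c i ^ Fintype.card G = 1 := by
    have := hk (Fintype.card G) i
    rw [hpow, Module.End.one_apply] at this
    exact smul_left_injective ℂ (b.ne_zero i) (by simpa using this.symm)
  refine ⟨m, c, hc, trace_eq_sum_of_apply_eq_smul b h,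
    trace_eq_sum_of_apply_eq_smul b fun i ↦ ?_⟩
  have hi : c i ≠ 0 := fun h0 ↦ by simpa [h0] using hc i
  calc ρ g⁻¹ (b i) = ρ g⁻¹ ((c i)⁻¹ • ρ g (b i)) := by rw [h, inv_smul_smul₀ hi]
    _ = (c i)⁻¹ • b i := by
      rw [map_smul, ← Module.End.mul_apply, ← map_mul, inv_mul_cancel, map_one,
        Module.End.one_apply]

theorem character_inv_eq_star (g : G) : ρ.character g⁻¹ = star (ρ.character g) := by
  obtain ⟨m, c, hc, h, hinv⟩ := exists_character_eq_sum ρ g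
  rw [h, hinv, star_sum]
  refine Finset.sum_congr rfl fun i _ ↦ ?_
  exact Complex.inv_eq_conj (Complex.norm_eq_one_of_pow_eq_one (hc i) Fintype.card_ne_zero)

theorem isIntegral_character (g : G) : IsIntegral ℤ (ρ.character g) := by
  obtain ⟨m, c, hc, h, -⟩ := exists_character_eq_sum ρ g
  rw [h]
  exact IsIntegral.sum _ fun i _ ↦
    IsIntegral.of_pow Fintype.card_pos (by rw [hc i]; exact isIntegral_one)

variable {ρ σ}

/-- Two representations with the same character of norm one are isomorphic. -/
theorem exists_linearEquiv_of_character_eq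
    (h : ∑ g : G, ρ.character g * ρ.character g⁻¹ = Nat.card G)
    (hρσ : ρ.character = σ.character) :
    ∃ e : V ≃ₗ[ℂ] W, ∀ g, e.conj (ρ g) = σ g := by
  have : Invertible (Nat.card G : ℂ) := invertibleOfNonzero (by simp)
  have h₁ : CategoryTheory.Simple (FDRep.of ρ) := (FDRep.simple_iff_char_is_norm_one _).2 h
  have h₂ : CategoryTheory.Simple (FDRep.of σ) :=
    (FDRep.simple_iff_char_is_norm_one _).2 (by rw [hρσ] at h; exact h)
  have hχ : (FDRep.of σ).character = (FDRep.of ρ).character := hρσ.symm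
  have key := FDRep.char_orthonormal (FDRep.of ρ) (FDRep.of σ)
  have h' : ∑ g : G, (FDRep.of ρ).character g * (FDRep.of ρ).character g⁻¹ = Nat.card G := h
  rw [hχ, h', inv_mul_cancel₀ (by simp)] at key
  have hne : Nonempty (FDRep.of ρ ≅ FDRep.of σ) := by
    by_contra hcon
    rw [if_neg hcon] at key
    exact one_ne_zero key
  obtain ⟨i⟩ := hne
  exact ⟨FDRep.isoToLinearEquiv i, fun g ↦ (FDRep.Iso.conj_ρ i g).symm⟩

/-- Schur's lemma for a representation with character of norm one. -/
theorem exists_eq_smul_one_of_commute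
    (h : ∑ g : G, ρ.character g * ρ.character g⁻¹ = Nat.card G)
    {T : End ℂ V} (hT : ∀ g, T * ρ g = ρ g * T) : ∃ c : ℂ, T = c • 1 := by
  have : Invertible (Nat.card G : ℂ) := invertibleOfNonzero (by simp)
  have key := Representation.card_inv_mul_sum_char_mul_char_eq_finrank ρ ρ
  rw [h, inv_mul_cancel₀ (by simp)] at key
  have hfin : finrank ℂ (Representation.IntertwiningMap ρ ρ) = 1 := by exact_mod_cast key.symm
  let I : Representation.IntertwiningMap ρ ρ := ⟨1, fun _ ↦ rfl⟩
  have hI : I ≠ 0 := by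
    intro h0
    have hV (v : V) : v = 0 := congrArg (fun F : Representation.IntertwiningMap ρ ρ ↦ F v) h0
    have : Subsingleton (Representation.IntertwiningMap ρ ρ) := by
      refine ⟨fun F F' ↦ ?_⟩
      ext v
      exact (hV _).trans (hV _).symm
    rw [finrank_zero_of_subsingleton] at hfin
    exact zero_ne_one hfin
  obtain ⟨c, hc⟩ := (finrank_eq_one_iff_of_nonzero' I hI).1 hfin ⟨T, hT⟩
  refine ⟨c, LinearMap.ext fun v ↦ ?_⟩
  exact (congrArg (fun F : Representation.IntertwiningMap ρ ρ ↦ F v) hc).symm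

omit [FiniteDimensional ℂ V] in
theorem nontrivial_of_sum_character_eq_card
    (h : ∑ g : G, ρ.character g * ρ.character g⁻¹ = Nat.card G) : Nontrivial V := by
  by_contra hV
  rw [not_nontrivial_iff_subsingleton] at hV
  have h0 (g : G) : ρ.character g = 0 := by
    rw [Representation.character, Subsingleton.elim (ρ g) 0, map_zero]
  simp [h0, eq_comm] at h

/-- The degree of an irreducible representation divides the order of the group. -/
theorem finrank_dvd_card
    (h : ∑ g : G, ρ.character g * ρ.character g⁻¹ = Nat.card G) :
    finrank ℂ V ∣ Nat.card G := by
  have hV := nontrivial_of_sum_character_eq_card h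
  have hn : (finrank ℂ V : ℂ) ≠ 0 := by exact_mod_cast finrank_pos.ne'
  let T : End ℂ V := ∑ g : G, ρ.character g⁻¹ • ρ g
  obtain ⟨c, hc⟩ : ∃ c : ℂ, T = c • 1 := by
    refine exists_eq_smul_one_of_commute h fun x ↦ ?_
    simp only [T, Finset.sum_mul, Finset.mul_sum, smul_mul_assoc, mul_smul_comm, ← map_mul]
    refine Fintype.sum_equiv (MulAut.conj x⁻¹).toEquiv _ _ fun g ↦ ?_
    have h₁ : ((MulAut.conj x⁻¹).toEquiv g)⁻¹ = x⁻¹ * g⁻¹ * x⁻¹⁻¹ := by simp [mul_assoc]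
    have h₂ : x * (MulAut.conj x⁻¹).toEquiv g = g * x := by simp [mul_assoc]
    rw [h₁, h₂, Representation.char_conj]
  have hcn : c * finrank ℂ V = Nat.card G := by
    have := congrArg (LinearMap.trace ℂ V) hc
    simp only [T, map_sum, map_smul, LinearMap.trace_one, smul_eq_mul] at this
    rw [← this, ← h]
    exact Finset.sum_congr rfl fun g _ ↦ mul_comm _ _
  have hint : IsIntegral ℤ c := by
    let A := integralClosure ℤ ℂ
    let F := MonoidAlgebra.lift A (End ℂ V) G ρ
    let z : MonoidAlgebra A G :=
      ∑ g : G, MonoidAlgebra.single g ⟨ρ.character g⁻¹, isIntegral_character ρ g⁻¹⟩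
    have hz : F z = algebraMap ℂ (End ℂ V) c := by
      rw [Algebra.algebraMap_eq_smul_one, ← hc, map_sum]
      exact Finset.sum_congr rfl fun g _ ↦ MonoidAlgebra.lift_single _ _ _
    have h₁ : IsIntegral A (algebraMap ℂ (End ℂ V) c) := by
      rw [← hz]
      exact (Algebra.IsIntegral.isIntegral z).map F
    have h₂ : IsIntegral A c :=
      (isIntegral_algebraMap_iff (FaithfulSMul.algebraMap_injective ℂ (End ℂ V))).1 h₁
    exact isIntegral_trans c h₂
  have hq : IsIntegral ℤ ((Nat.card G : ℚ) / finrank ℂ V) := by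
    refine (isIntegral_algebraMap_iff (algebraMap ℚ ℂ).injective).1 ?_
    convert hint
    rw [map_div₀, map_natCast, map_natCast, ← hcn, mul_div_cancel_right₀ _ hn]
  obtain ⟨y, hy⟩ := IsIntegrallyClosed.isIntegral_iff.1 hq
  have hy' : (Nat.card G : ℚ) = finrank ℂ V * y := by
    have : (finrank ℂ V : ℚ) ≠ 0 := by exact_mod_cast finrank_pos.ne'
    rw [eq_div_iff this] at hy
    rw [← hy, mul_comm]
    rfl
  exact Int.natCast_dvd_natCast.1 ⟨y, by exact_mod_cast hy'⟩

end Representation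

/-- A representation twisted by a power of its inverse determinant. -/
noncomputable def detTwist {G V : Type} [Group G] [AddCommGroup V] [Module ℂ V]
    (ρ : Representation ℂ G V) (s : ℕ) : Representation ℂ G V where
  toFun g := LinearMap.det (ρ g⁻¹) ^ s • ρ g
  map_one' := by simp
  map_mul' g h := by
    rw [mul_inv_rev, map_mul, map_mul, map_mul, smul_mul_smul_comm, mul_comm, mul_pow]

/-- Let `σ` be a representation of `G` whose restriction to `N` is irreducible, and let `ρ` be a
representation of `K ⊇ N` that agrees with `σ` on `N`. If the index of `N` in `K` is prime to the
degree and to the determinantal order of `ρ`, then some determinantal twist of `σ` restricts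
to `ρ`. -/
theorem exists_detTwist_eq {G V : Type} [Group G] [Fintype G] [AddCommGroup V]
    [Module ℂ V] [FiniteDimensional ℂ V] {N K : Subgroup G} [hN : N.Normal] (hNK : N ≤ K)
    (σ : Representation ℂ G V) (ρ : Representation ℂ K V)
    (hirr : ∑ x : N, σ.character x * σ.character (x : G)⁻¹ = Nat.card N)
    (hρσ : ∀ x : N, ρ ⟨x, hNK x.2⟩ = σ x)
    {d : ℕ} (hd : ∀ k, LinearMap.det (ρ k) ^ d = 1)
    (hdq : d.Coprime (N.subgroupOf K).index)
    (hnq : (finrank ℂ V).Coprime (N.subgroupOf K).index) :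
    ∃ s, ∀ k : K, detTwist σ s k = ρ k := by
  have hirr' : ∑ x : N, Representation.character (σ.comp N.subtype) x *
      Representation.character (σ.comp N.subtype) x⁻¹ = Nat.card N := hirr
  have hV := nontrivial_of_sum_character_eq_card hirr'
  have hinv (g : G) : σ g * σ g⁻¹ = 1 := by rw [← map_mul, mul_inv_cancel, map_one]
  have hscalar (k : K) : ∃ c : ℂ, ρ k = c • σ k := by
    obtain ⟨c, hc⟩ : ∃ c : ℂ, σ (k : G)⁻¹ * ρ k = c • 1 := by
      refine exists_eq_smul_one_of_commute hirr' fun x ↦ ?_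
      let y : N := ⟨k * x * (k : G)⁻¹, hN.conj_mem _ x.2 k⟩
      have h₁ : ρ k * σ x = σ y * ρ k := by
        rw [← hρσ x, ← hρσ y, ← map_mul, ← map_mul]
        congr 1
        ext
        simp [y]
      have h₂ : σ (k : G)⁻¹ * σ y = σ x * σ (k : G)⁻¹ := by
        rw [← map_mul, ← map_mul]
        congr 1
        simp [y, mul_assoc]
      change σ (k : G)⁻¹ * ρ k * σ x = σ x * (σ (k : G)⁻¹ * ρ k)
      rw [mul_assoc, h₁, ← mul_assoc, h₂, mul_assoc]
    refine ⟨c, ?_⟩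
    rw [← one_mul (ρ k), ← hinv k, mul_assoc, hc, mul_smul_comm, mul_one]
  choose c hc using hscalar
  have hcq : c ^ (N.subgroupOf K).index = 1 := by
    funext k
    let y : N := ⟨(k : G) ^ (N.subgroupOf K).index,
      Subgroup.mem_subgroupOf.1 ((N.subgroupOf K).pow_index_mem k)⟩
    have h₁ : ρ k ^ (N.subgroupOf K).index = σ k ^ (N.subgroupOf K).index := by
      rw [← map_pow, ← map_pow]
      exact hρσ y
    have hu : IsUnit (σ k ^ (N.subgroupOf K).index) :=
      (IsUnit.of_mul_eq_one _ (hinv k)).pow _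
    rw [hc k, smul_pow] at h₁
    have h₂ : (c k ^ (N.subgroupOf K).index) • (1 : End ℂ V) = (1 : ℂ) • 1 := by
      refine hu.mul_right_cancel ?_
      rw [smul_mul_assoc, one_mul, h₁, one_smul, one_mul]
    exact smul_left_injective ℂ (one_ne_zero (α := End ℂ V)) h₂
  obtain ⟨a, ha⟩ : ∃ a, (c ^ (finrank ℂ V * d)) ^ a = c :=
    exists_pow_eq_self_of_coprime
      ((hnq.mul_left hdq).coprime_dvd_right (orderOf_dvd_of_pow_eq_one hcq))
  refine ⟨d * a, fun k ↦ ?_⟩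
  have hdet : (c k ^ finrank ℂ V) ^ d * LinearMap.det (σ k) ^ d = 1 := by
    rw [← mul_pow, ← LinearMap.det_smul, ← hc, hd]
  have hdet' : LinearMap.det (σ k) * LinearMap.det (σ (k : G)⁻¹) = 1 := by
    rw [← map_mul, hinv, map_one]
  have hck : LinearMap.det (σ (k : G)⁻¹) ^ (d * a) = c k := by
    rw [← congrFun ha k, Pi.pow_apply, Pi.pow_apply, pow_mul, pow_mul]
    congr 1
    calc LinearMap.det (σ (k : G)⁻¹) ^ d
        = ((c k ^ finrank ℂ V) ^ d * LinearMap.det (σ k) ^ d)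
            * LinearMap.det (σ (k : G)⁻¹) ^ d := by rw [hdet, one_mul]
      _ = (c k ^ finrank ℂ V) ^ d := by rw [mul_assoc, ← mul_pow, hdet', one_pow, mul_one]
  rw [hc k, ← hck]
  rfl

theorem index_subgroupOf_sup_dvd {G : Type*} [Group G] (N P : Subgroup G) [N.Normal] :
    (N.subgroupOf (N ⊔ P)).index ∣ Nat.card P := by
  change N.relIndex (N ⊔ P) ∣ _
  rw [Subgroup.relIndex_sup_left]
  exact Subgroup.relIndex_dvd_card ..

/-- `N ⊴ G` a `p'`-group, `P` a `p`-subgroup with `K = NP ⊴ G`,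
`μ ∈ Irr(N)` `G`-invariant with canonical extension `μ^◇` to `K`.  Then `μ`
extends to `G` if and only if `μ^◇` extends to `G`. -/
theorem canonical_extension_extends {G : Type} [Group G] [Fintype G]
    (p : ℕ) (hp : p.Prime) (N P : Subgroup G) (hN : N.Normal)
    (hN' : ¬ p ∣ Fintype.card ↥N) (hP : IsPGroup p P)
    (hK : (N ⊔ P).Normal)
    (μ : ↥N → ℂ) (hμ : IsIrrChar ↥N μ) (hinv : Invariant N μ)
    (μd : ↥(N ⊔ P) → ℂ) (hμd : IsCanonicalExtensionOn (N ⊔ P) N le_sup_left μ μd) :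
    (∃ χ : G → ℂ, IsChar G χ ∧ ∀ x : ↥N, χ x.1 = μ x) ↔
      (∃ χ : G → ℂ, IsChar G χ ∧ ∀ x : ↥(N ⊔ P), χ x.1 = μd x) := by
  constructor
  · rintro ⟨χ, ⟨n, σ, hσ⟩, hχμ⟩
    obtain ⟨hext, m, ρ, hρ, hcop⟩ := hμd
    let μσ : Representation ℂ N (Fin n → ℂ) := σ.comp N.subtype
    let μρ : Representation ℂ N (Fin m → ℂ) := ρ.comp (Subgroup.inclusion le_sup_left)
    have hμσ : μσ.character = μ := funext fun x ↦ ((hσ x).symm.trans (hχμ x))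
    have hμρ : μρ.character = μ := funext fun x ↦ ((hρ _).symm.trans (hext x))
    have hirr : ∑ x : N, μσ.character x * μσ.character x⁻¹ = Nat.card N := by
      have h1 := hμ.2
      rw [cfInner, inv_mul_eq_one₀ (by simp)] at h1
      simp_rw [character_inv_eq_star, hμσ]
      rw [← h1, Nat.card_eq_fintype_card]
    have hirr' : ∑ x : N, μρ.character x * μρ.character x⁻¹ = Nat.card N := by
      rw [hμρ, ← hμσ, hirr]
    obtain ⟨e, he⟩ := exists_linearEquiv_of_character_eq hirr' (hμρ.trans hμσ.symm)
    let ρ' : Representation ℂ ↥(N ⊔ P) (Fin n → ℂ) :=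
      (e.conjRingEquiv : End ℂ (Fin m → ℂ) →* End ℂ (Fin n → ℂ)).comp ρ
    have hρ' (k) : ρ' k = e.conj (ρ k) := rfl
    have hpN : p.Coprime (Nat.card N) := by
      rw [Nat.card_eq_fintype_card]
      exact (hp.coprime_iff_not_dvd).2 hN'
    have : Fact p.Prime := ⟨hp⟩
    obtain ⟨r, hr⟩ := (IsPGroup.iff_card (p := p)).1 hP
    obtain ⟨s, hs⟩ := exists_detTwist_eq le_sup_left σ ρ' hirr he (d := detOrder ρ)
      (fun k ↦ by
        rw [hρ', LinearEquiv.conj_apply, LinearMap.comp_assoc, LinearMap.det_conj]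
        exact DFunLike.congr_fun (pow_orderOf_eq_one (LinearMap.det.comp ρ)) k) hcop
      ((Nat.Coprime.pow_right r (hpN.symm.coprime_dvd_left (finrank_dvd_card hirr))).coprime_dvd_right
        (hr ▸ index_subgroupOf_sup_dvd N P))
    refine ⟨fun g ↦ LinearMap.trace ℂ _ (detTwist σ s g), ⟨n, detTwist σ s, fun _ ↦ rfl⟩,
      fun x ↦ ?_⟩
    beta_reduce
    rw [hs, hρ', LinearMap.trace_conj', hρ]
  · rintro ⟨χ, hχ, h⟩
    exact ⟨χ, hχ, fun x ↦ (h ⟨x, le_sup_left (a := N) x.2⟩).trans (hμd.1 x)⟩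

end CTC
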